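/- arXiv:2408.04642 — 3 statements merged into one kernel-verified Lean document; each statement's English description precedes it below -/
import Mathlib

section
/- Let G be a finite simple bipartite graph with bipartition X = {x_1,...,x_n}, Y = {y_1,...,y_n}, and let F_1, F_2 be 1-factors (perfect matchings) of G. Let t be the number of cycles in the spanning subgraph F_1 ∪ F_2 whose length is congruent to 0 modulo 4. Then sgn(F_1)·sgn(F_2) = (−1)^t. -/
open SimpleGraph

/-- A 1-factor (perfect matching) of `G`: a 1-regular spanning subgraph, given as a
simple graph `F ≤ G` in which every vertex has exactly one neighbour. -/
def IsOneFactor {V : Type*} (G F : SimpleGraph V) : Prop :=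
  F ≤ G ∧ ∀ v : V, (F.neighborSet v).ncard = 1

lemma adj_cases_aux {n : ℕ} (G F : SimpleGraph (Fin n ⊕ Fin n))
    (hbip : ∀ i j : Fin n,
      ¬ G.Adj (Sum.inl i) (Sum.inl j) ∧ ¬ G.Adj (Sum.inr i) (Sum.inr j))
    (hF : IsOneFactor G F) (σ : Equiv.Perm (Fin n))
    (hσ : ∀ i : Fin n, F.Adj (Sum.inl i) (Sum.inr (σ i)))
    (u v : Fin n ⊕ Fin n) (h : F.Adj u v) :
    ∃ i, (u = Sum.inl i ∧ v = Sum.inr (σ i)) ∨ (v = Sum.inl i ∧ u = Sum.inr (σ i)) := by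
  have key : ∀ i w, F.Adj (Sum.inl i) w → w = Sum.inr (σ i) := by
    intro i w hw
    obtain ⟨a, ha⟩ := Set.ncard_eq_one.mp (hF.2 (Sum.inl i))
    have h1 : w ∈ F.neighborSet (Sum.inl i) := hw
    have h2 : Sum.inr (σ i) ∈ F.neighborSet (Sum.inl i) := hσ i
    rw [ha] at h1 h2
    exact h1.trans h2.symm
  rcases u with i | i
  · exact ⟨i, Or.inl ⟨rfl, key i v h⟩⟩
  · rcases v with j | j
    · exact ⟨j, Or.inr ⟨rfl, key j _ h.symm⟩⟩
    · exact absurd (hF.1 h) (hbip i j).2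

lemma sign_eq_aux {n : ℕ} (τ : Equiv.Perm (Fin n)) :
    Equiv.Perm.sign τ =
      (-1) ^ (τ.cycleFactorsFinset.filter (fun c => Even c.support.card)).card := by
  rw [Equiv.Perm.sign_of_cycleType', Equiv.Perm.cycleType_def, Multiset.map_map]
  change ∏ c ∈ τ.cycleFactorsFinset, (-(-1) ^ c.support.card : ℤˣ) = _
  rw [← Finset.prod_const, Finset.prod_filter]
  refine Finset.prod_congr rfl fun c _ => ?_
  split_ifs with h
  · rw [h.neg_one_pow]
  · rw [(Nat.not_even_iff_odd.mp h).neg_one_pow, neg_neg]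

/-- let `G` be a bipartite graph on `X = {x_1, …, x_n}`,
`Y = {y_1, …, y_n}` (modelled on the vertex set `Fin n ⊕ Fin n`, with all edges going
between the two parts), let `F₁, F₂` be 1-factors of `G`, inducing permutations
`σ₁, σ₂` of `{1, …, n}` (where `x_i` is matched to `y_{σ i}`), and let `t` be the
number of cycles of `F₁ ∪ F₂` (i.e. connected components, a cycle of length `ℓ` having
`ℓ` vertices) whose length is `≡ 0 (mod 4)`. Then `sgn(F₁)·sgn(F₂) = (-1)^t`. -/
theorem stmt_0 (n : ℕ) (G : SimpleGraph (Fin n ⊕ Fin n))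
    (hbip : ∀ i j : Fin n,
      ¬ G.Adj (Sum.inl i) (Sum.inl j) ∧ ¬ G.Adj (Sum.inr i) (Sum.inr j))
    (F₁ F₂ : SimpleGraph (Fin n ⊕ Fin n))
    (hF₁ : IsOneFactor G F₁) (hF₂ : IsOneFactor G F₂)
    (σ₁ σ₂ : Equiv.Perm (Fin n))
    (hσ₁ : ∀ i : Fin n, F₁.Adj (Sum.inl i) (Sum.inr (σ₁ i)))
    (hσ₂ : ∀ i : Fin n, F₂.Adj (Sum.inl i) (Sum.inr (σ₂ i)))
    (t : ℕ)
    (ht : t = Nat.card {c : (F₁ ⊔ F₂).ConnectedComponent // c.supp.ncard % 4 = 0}) :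
    Equiv.Perm.sign σ₁ * Equiv.Perm.sign σ₂ = (-1) ^ t := by
  classical
  set τ : Equiv.Perm (Fin n) := σ₂⁻¹ * σ₁ with hτ
  have hs : Equiv.Perm.sign σ₁ * Equiv.Perm.sign σ₂ = Equiv.Perm.sign τ := by
    rw [hτ, map_mul, Equiv.Perm.sign_inv, mul_comm]
  set p : Fin n ⊕ Fin n → Fin n := Sum.elim id (fun j => σ₁⁻¹ j) with hp
  have hadj : ∀ u v, (F₁ ⊔ F₂).Adj u v → τ.SameCycle (p u) (p v) := by
    intro u v h
    have e2 : ∀ i, τ.SameCycle i (σ₁⁻¹ (σ₂ i)) := fun i => ⟨-1, by simp [hτ]⟩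
    rcases h with h | h
    · obtain ⟨i, ⟨rfl, rfl⟩ | ⟨rfl, rfl⟩⟩ := adj_cases_aux G F₁ hbip hF₁ σ₁ hσ₁ u v h <;>
        simp [hp, Equiv.Perm.SameCycle.refl]
    · obtain ⟨i, ⟨rfl, rfl⟩ | ⟨rfl, rfl⟩⟩ := adj_cases_aux G F₂ hbip hF₂ σ₂ hσ₂ u v h
      · exact e2 i
      · exact (e2 i).symm
  have hfw : ∀ u v, (F₁ ⊔ F₂).Reachable u v → τ.SameCycle (p u) (p v) := by
    rintro u v ⟨w⟩
    induction w with
    | nil => exact Equiv.Perm.SameCycle.refl _ _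
    | cons h _ ih => exact (hadj _ _ h).trans ih
  have hA1 : ∀ i, (F₁ ⊔ F₂).Reachable (Sum.inl i) (Sum.inr (σ₁ i)) :=
    fun i => SimpleGraph.Adj.reachable (Or.inl (hσ₁ i))
  have hA2 : ∀ i, (F₁ ⊔ F₂).Reachable (Sum.inl i) (Sum.inr (σ₂ i)) :=
    fun i => SimpleGraph.Adj.reachable (Or.inr (hσ₂ i))
  have hup : ∀ u, (F₁ ⊔ F₂).Reachable u (Sum.inl (p u)) := by
    rintro (i | j)
    · exact SimpleGraph.Reachable.refl _
    · have := hA1 (σ₁⁻¹ j)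
      rw [show σ₁ (σ₁⁻¹ j) = j by simp] at this
      exact this.symm
  have hstep : ∀ i, (F₁ ⊔ F₂).Reachable (Sum.inl i) (Sum.inl (τ i)) := by
    intro i
    have := hA2 (τ i)
    have e : σ₂ (τ i) = σ₁ i := by simp [hτ]
    rw [e] at this
    exact (hA1 i).trans this.symm
  have hpow : ∀ (k : ℕ) i, (F₁ ⊔ F₂).Reachable (Sum.inl i) (Sum.inl ((τ ^ k) i)) := by
    intro k
    induction k with
    | zero => intro i; exact SimpleGraph.Reachable.refl _
    | succ k ih =>
      intro i
      rw [pow_succ', Equiv.Perm.mul_apply]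
      exact (ih i).trans (hstep _)
  have hiff : ∀ u v, (F₁ ⊔ F₂).Reachable u v ↔ τ.SameCycle (p u) (p v) := by
    intro u v
    refine ⟨hfw u v, fun h => ?_⟩
    obtain ⟨k, -, hk⟩ := h.exists_pow_eq'
    have := hpow k (p u)
    rw [hk] at this
    exact (hup u).trans (this.trans (hup v).symm)
  have hcard : ∀ i, ((F₁ ⊔ F₂).connectedComponentMk (Sum.inl i)).supp.ncard
      = 2 * {j | τ.SameCycle i j}.ncard := by
    intro i
    have e : ((F₁ ⊔ F₂).connectedComponentMk (Sum.inl i)).supp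
        = Sum.inl '' {j | τ.SameCycle i j} ∪ (Sum.inr ∘ σ₁) '' {j | τ.SameCycle i j} := by
      ext v
      rw [SimpleGraph.ConnectedComponent.mem_supp_iff, SimpleGraph.ConnectedComponent.eq,
        hiff, Equiv.Perm.sameCycle_comm]
      rcases v with j | j
      · simp [hp]
      · simp only [hp, Sum.elim_inl, Sum.elim_inr, id, Set.mem_union, Set.mem_image,
          Set.mem_ofPred_eq, Function.comp_apply, reduceCtorEq, and_false, exists_false,
          false_or, Sum.inr.injEq]
        constructor
        · intro h
          exact ⟨_, h, by simp⟩
        · rintro ⟨x, hx, rfl⟩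
          simpa using hx
    rw [e, Set.ncard_union_eq _ (Set.toFinite _) (Set.toFinite _),
      Set.ncard_image_of_injective _ Sum.inl_injective,
      Set.ncard_image_of_injective _ (Sum.inr_injective.comp σ₁.injective), two_mul]
    rw [Set.disjoint_left]
    rintro _ ⟨a, _, rfl⟩ ⟨b, _, hb⟩
    simp at hb
  have hsupp : ∀ i, i ∈ τ.support →
      (τ.cycleOf i).support.card = {j | τ.SameCycle i j}.ncard := by
    intro i hi
    rw [← Set.ncard_coe_finset]
    congr 1
    ext j
    simp [Equiv.Perm.mem_support_cycleOf_iff' (Equiv.Perm.mem_support.mp hi)]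
  have hfix : ∀ i, i ∉ τ.support → {j | τ.SameCycle i j}.ncard = 1 := by
    intro i hi
    rw [Set.ncard_eq_one]
    refine ⟨i, ?_⟩
    ext j
    simp only [Set.mem_ofPred_eq, Set.mem_singleton_iff]
    have hfx : Function.IsFixedPt τ i := Equiv.Perm.notMem_support.mp hi
    exact ⟨fun h => (h.eq_of_left hfx).symm, fun h => h ▸ Equiv.Perm.SameCycle.refl _ _⟩
  have hmem : ∀ i, ((F₁ ⊔ F₂).connectedComponentMk (Sum.inl i)).supp.ncard % 4 = 0 ↔
      i ∈ τ.support ∧ Even (τ.cycleOf i).support.card := by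
    intro i
    rw [hcard]
    by_cases hi : i ∈ τ.support
    · rw [hsupp i hi, Nat.even_iff]
      simp only [hi, true_and]
      omega
    · rw [hfix i hi]
      simp [hi]
  rw [hs, sign_eq_aux, ht]
  congr 1
  rw [← Nat.card_eq_finsetCard]
  have hex : ∀ c : (F₁ ⊔ F₂).ConnectedComponent, ∃ i, (F₁ ⊔ F₂).connectedComponentMk (Sum.inl i) = c := by
    intro c
    induction c using SimpleGraph.ConnectedComponent.ind with
    | _ v => exact ⟨p v, SimpleGraph.ConnectedComponent.eq.mpr (hup v).symm⟩
  choose r hr using hex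
  symm
  refine Nat.card_eq_of_bijective (fun c => ⟨τ.cycleOf (r c.1), ?_⟩) ⟨?_, ?_⟩
  · have h := c.2
    rw [← hr c.1, hmem] at h
    exact Finset.mem_filter.mpr ⟨Equiv.Perm.cycleOf_mem_cycleFactorsFinset_iff.mpr h.1, h.2⟩
  · intro c d hcd
    have h := c.2
    rw [← hr c.1, hmem] at h
    have e : τ.cycleOf (r c.1) = τ.cycleOf (r d.1) := congrArg Subtype.val hcd
    have hm : r c.1 ∈ (τ.cycleOf (r d.1)).support := by
      rw [← e, Equiv.Perm.mem_support_cycleOf_iff]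
      exact ⟨Equiv.Perm.SameCycle.refl _ _, h.1⟩
    rw [Equiv.Perm.mem_support_cycleOf_iff] at hm
    apply Subtype.ext
    rw [← hr c.1, ← hr d.1, SimpleGraph.ConnectedComponent.eq, hiff]
    exact hm.1.symm
  · rintro ⟨c, hc⟩
    obtain ⟨hc1, hc2⟩ := Finset.mem_filter.mp hc
    obtain ⟨i, hi⟩ := (Equiv.Perm.mem_cycleFactorsFinset_iff.mp hc1).1.nonempty_support
    have hci : c = τ.cycleOf i := Equiv.Perm.cycle_is_cycleOf hi hc1
    have his : i ∈ τ.support := Equiv.Perm.mem_cycleFactorsFinset_support_le hc1 hi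
    refine ⟨⟨(F₁ ⊔ F₂).connectedComponentMk (Sum.inl i), (hmem i).mpr ⟨his, hci ▸ hc2⟩⟩, ?_⟩
    apply Subtype.ext
    have h := hr ((F₁ ⊔ F₂).connectedComponentMk (Sum.inl i))
    rw [SimpleGraph.ConnectedComponent.eq, hiff] at h
    exact (Equiv.Perm.SameCycle.cycleOf_eq h).trans hci.symm
end

section
/- Let G_1 and G_2 be graphs, y ∈ V(G_1) a vertex of degree 3 with neighbours x_1, x_2, x_3, and x ∈ V(G_2) a vertex of degree 3 with neighbours y_1, y_2, y_3. Let G = (G_1 − y) ∪ (G_2 − x) ∪ {x_1y_1, x_2y_2, x_3y_3} be the star product of G_1 and G_2, with 3-edge-cut X = {x_1y_1, x_2y_2, x_3y_3}. Suppose G is bipartite and every pair of edges of X belongs to a common 2-factor of G. Then G is 2-factor Hamiltonian if and only if both G_1 and G_2 are 2-factor Hamiltonian. -/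
open SimpleGraph

/-- A 2-factor of `G`: a 2-regular spanning subgraph, given as a simple graph `F ≤ G`
in which every vertex has exactly two neighbours. -/
def IsTwoFactor {V : Type*} (G F : SimpleGraph V) : Prop :=
  F ≤ G ∧ ∀ v : V, (F.neighborSet v).ncard = 2

/-- A graph admitting a 2-factor is 2-factor Hamiltonian if every 2-factor of it is a
Hamiltonian cycle, i.e. every 2-factor is connected. -/
def TwoFactorHamiltonian {V : Type*} (G : SimpleGraph V) : Prop :=
  (∃ F, IsTwoFactor G F) ∧ ∀ F, IsTwoFactor G F → F.Connected

namespace StarProd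

/-- The vertex set `W` of a star product, with both sides and projections. -/
structure Frame {V₁ V₂ W : Type*} (f : V₁ → W) (g : V₂ → W) (φ : W → V₁) (ψ : W → V₂)
    (y : V₁) (x : V₂) (xs : Fin 3 → V₁) (ys : Fin 3 → V₂) : Prop where
  φf : ∀ p, p ≠ y → φ (f p) = p
  φg : ∀ q, q ≠ x → φ (g q) = y
  ψf : ∀ p, p ≠ y → ψ (f p) = x
  ψg : ∀ q, q ≠ x → ψ (g q) = q
  cover : ∀ w, (∃ p, p ≠ y ∧ w = f p) ∨ (∃ q, q ≠ x ∧ w = g q)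
  xinj : Function.Injective xs
  yinj : Function.Injective ys
  xne : ∀ i, xs i ≠ y
  yne : ∀ i, ys i ≠ x

/-- `F` is the star product of `H₁` and `H₂`. -/
structure IsStar {V₁ V₂ W : Type*} (f : V₁ → W) (g : V₂ → W)
    (y : V₁) (x : V₂) (xs : Fin 3 → V₁) (ys : Fin 3 → V₂)
    (H₁ : SimpleGraph V₁) (H₂ : SimpleGraph V₂) (F : SimpleGraph W) : Prop where
  ff : ∀ p q, p ≠ y → q ≠ y → (F.Adj (f p) (f q) ↔ H₁.Adj p q)
  gg : ∀ p q, p ≠ x → q ≠ x → (F.Adj (g p) (g q) ↔ H₂.Adj p q)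
  fg : ∀ p q, p ≠ y → q ≠ x →
    (F.Adj (f p) (g q) ↔ ∃ i, p = xs i ∧ q = ys i ∧ H₁.Adj y (xs i))
  n1 : ∀ p, H₁.Adj y p → ∃ i, p = xs i
  n2 : ∀ p, H₂.Adj x p → ∃ i, p = ys i
  c : ∀ i, H₁.Adj y (xs i) ↔ H₂.Adj x (ys i)

section
variable {V₁ V₂ W : Type*} {f : V₁ → W} {g : V₂ → W} {φ : W → V₁} {ψ : W → V₂}
    {y : V₁} {x : V₂} {xs : Fin 3 → V₁} {ys : Fin 3 → V₂}
    {H₁ : SimpleGraph V₁} {H₂ : SimpleGraph V₂} {F : SimpleGraph W}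
    {G₁ : SimpleGraph V₁} {G₂ : SimpleGraph V₂} {G : SimpleGraph W}

theorem Frame.symm (h : Frame f g φ ψ y x xs ys) : Frame g f ψ φ x y ys xs :=
  ⟨h.ψg, h.ψf, h.φg, h.φf, fun w => (h.cover w).symm, h.yinj, h.xinj, h.yne, h.xne⟩

theorem IsStar.symm (h : IsStar f g y x xs ys H₁ H₂ F) : IsStar g f x y ys xs H₂ H₁ F := by
  refine ⟨h.gg, h.ff, ?_, h.n2, h.n1, fun i => (h.c i).symm⟩
  intro p q hp hq
  rw [F.adj_comm, h.fg q p hq hp]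
  constructor
  · rintro ⟨i, a, b, k⟩; exact ⟨i, b, a, (h.c i).1 k⟩
  · rintro ⟨i, a, b, k⟩; exact ⟨i, b, a, (h.c i).2 k⟩

theorem Frame.finj (h : Frame f g φ ψ y x xs ys) {p q : V₁} (hp : p ≠ y) (hq : q ≠ y)
    (e : f p = f q) : p = q := by
  rw [← h.φf p hp, ← h.φf q hq, e]

theorem Frame.fgne (h : Frame f g φ ψ y x xs ys) {p : V₁} {q : V₂} (hp : p ≠ y) (hq : q ≠ x) :
    f p ≠ g q := by
  intro e
  apply hp
  rw [← h.φf p hp, e, h.φg q hq]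

theorem deg_eq (h : Frame f g φ ψ y x xs ys) (s : IsStar f g y x xs ys H₁ H₂ F)
    {p : V₁} (hp : p ≠ y) : (F.neighborSet (f p)).ncard = (H₁.neighborSet p).ncard := by
  have him : φ '' (F.neighborSet (f p)) = H₁.neighborSet p := by
    ext q
    simp only [Set.mem_image, mem_neighborSet]
    constructor
    · rintro ⟨w, hw, rfl⟩
      rcases h.cover w with ⟨r, hr, rfl⟩ | ⟨r, hr, rfl⟩
      · rw [h.φf r hr]; exact (s.ff p r hp hr).1 hw
      · rw [h.φg r hr]
        obtain ⟨i, rfl, rfl, k⟩ := (s.fg p r hp hr).1 hw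
        exact k.symm
    · intro k
      by_cases hq : q = y
      · subst hq
        obtain ⟨i, rfl⟩ := s.n1 p k.symm
        exact ⟨g (ys i), (s.fg _ _ hp (h.yne i)).2 ⟨i, rfl, rfl, k.symm⟩, h.φg _ (h.yne i)⟩
      · exact ⟨f q, (s.ff p q hp hq).2 k, h.φf q hq⟩
  rw [← him]
  symm
  apply Set.InjOn.ncard_image
  intro a ha b hb e
  simp only [mem_neighborSet] at ha hb
  rcases h.cover a with ⟨r, hr, rfl⟩ | ⟨r, hr, rfl⟩ <;>
  rcases h.cover b with ⟨t, ht, rfl⟩ | ⟨t, ht, rfl⟩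
  · rw [h.φf r hr, h.φf t ht] at e; rw [e]
  · rw [h.φf r hr, h.φg t ht] at e; exact absurd e hr
  · rw [h.φg r hr, h.φf t ht] at e; exact absurd e.symm ht
  · obtain ⟨i, hi, rfl, -⟩ := (s.fg p r hp hr).1 ha
    obtain ⟨j, hj, rfl, -⟩ := (s.fg p t hp ht).1 hb
    rw [h.xinj (hi.symm.trans hj)]

theorem deg_y (h : Frame f g φ ψ y x xs ys) (n1 : ∀ p, H₁.Adj y p → ∃ i, p = xs i) :
    (H₁.neighborSet y).ncard = {i | H₁.Adj y (xs i)}.ncard := by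
  rw [← Set.ncard_image_of_injective _ h.xinj]
  congr 1
  ext p
  simp only [Set.mem_image, mem_neighborSet, Set.mem_ofPred_eq]
  constructor
  · intro k
    obtain ⟨i, rfl⟩ := n1 p k
    exact ⟨i, k, rfl⟩
  · rintro ⟨i, k, rfl⟩; exact k

theorem two_reg (h : Frame f g φ ψ y x xs ys) (s : IsStar f g y x xs ys H₁ H₂ F)
    (h1 : ∀ v, (H₁.neighborSet v).ncard = 2) (h2 : ∀ v, (H₂.neighborSet v).ncard = 2) :
    ∀ w, (F.neighborSet w).ncard = 2 := by
  intro w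
  rcases h.cover w with ⟨p, hp, rfl⟩ | ⟨p, hp, rfl⟩
  · rw [deg_eq h s hp, h1]
  · rw [deg_eq h.symm s.symm hp, h2]

theorem two_reg_side (h : Frame f g φ ψ y x xs ys) (s : IsStar f g y x xs ys H₁ H₂ F)
    (hF : ∀ w, (F.neighborSet w).ncard = 2) (hS : {i | H₁.Adj y (xs i)}.ncard = 2) :
    ∀ v, (H₁.neighborSet v).ncard = 2 := by
  intro v
  by_cases hv : v = y
  · subst hv; rw [deg_y h s.n1, hS]
  · rw [← deg_eq h s hv, hF]

theorem conn_side (h : Frame f g φ ψ y x xs ys) (s : IsStar f g y x xs ys H₁ H₂ F)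
    (hF : F.Connected) : H₁.Connected := by
  have key : ∀ a b, F.Reachable a b → H₁.Reachable (φ a) (φ b) := by
    rintro a b ⟨w⟩
    induction w with
    | nil => exact Reachable.refl _
    | @cons a b c hab w ih =>
      refine Reachable.trans ?_ ih
      rcases h.cover a with ⟨r, hr, rfl⟩ | ⟨r, hr, rfl⟩ <;>
      rcases h.cover b with ⟨t, ht, rfl⟩ | ⟨t, ht, rfl⟩
      · rw [h.φf r hr, h.φf t ht]; exact ((s.ff r t hr ht).1 hab).reachable
      · rw [h.φf r hr, h.φg t ht]
        obtain ⟨i, rfl, rfl, k⟩ := (s.fg r t hr ht).1 hab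
        exact k.symm.reachable
      · rw [h.φg r hr, h.φf t ht]
        obtain ⟨i, rfl, rfl, k⟩ := (s.fg t r ht hr).1 hab.symm
        exact k.reachable
      · rw [h.φg r hr, h.φg t ht]
  have surj : ∀ v, ∃ w, φ w = v := by
    intro v
    by_cases hv : v = y
    · exact ⟨g (ys 0), by rw [h.φg _ (h.yne 0), hv]⟩
    · exact ⟨f v, h.φf v hv⟩
  have : Nonempty V₁ := ⟨y⟩
  refine Connected.mk ?_
  intro a b
  obtain ⟨a, rfl⟩ := surj a
  obtain ⟨b, rfl⟩ := surj b
  exact key a b (hF.preconnected a b)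

theorem exists_glue (h : Frame f g φ ψ y x xs ys) (s : IsStar f g y x xs ys G₁ G₂ G)
    (h1 : H₁ ≤ G₁) (h2 : H₂ ≤ G₂) (hc : ∀ i, H₁.Adj y (xs i) ↔ H₂.Adj x (ys i)) :
    ∃ F, F ≤ G ∧ IsStar f g y x xs ys H₁ H₂ F := by
  let F : SimpleGraph W :=
    { Adj := fun a b => (φ a ≠ y ∧ φ b ≠ y ∧ H₁.Adj (φ a) (φ b)) ∨
        (ψ a ≠ x ∧ ψ b ≠ x ∧ H₂.Adj (ψ a) (ψ b)) ∨
        (∃ i, H₁.Adj y (xs i) ∧ ((a = f (xs i) ∧ b = g (ys i)) ∨ (a = g (ys i) ∧ b = f (xs i))))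
      symm := ⟨by
        rintro a b (⟨k, l, m⟩ | ⟨k, l, m⟩ | ⟨i, k, m⟩)
        · exact Or.inl ⟨l, k, m.symm⟩
        · exact Or.inr (Or.inl ⟨l, k, m.symm⟩)
        · exact Or.inr (Or.inr ⟨i, k, by tauto⟩)⟩
      loopless := ⟨by
        rintro a (⟨k, l, m⟩ | ⟨k, l, m⟩ | ⟨i, k, ⟨m, n⟩ | ⟨m, n⟩⟩)
        · exact H₁.loopless.irrefl _ m
        · exact H₂.loopless.irrefl _ m
        · exact h.fgne (h.xne i) (h.yne i) (m.symm.trans n)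
        · exact h.fgne (h.xne i) (h.yne i) (n.symm.trans m)⟩ }
  have sF : IsStar f g y x xs ys H₁ H₂ F := by
    refine ⟨?_, ?_, ?_, fun p k => s.n1 p (h1 k), fun p k => s.n2 p (h2 k), hc⟩
    · intro p q hp hq
      constructor
      · rintro (⟨k, l, m⟩ | ⟨k, l, m⟩ | ⟨i, k, ⟨m, n⟩ | ⟨m, n⟩⟩)
        · rwa [h.φf p hp, h.φf q hq] at m
        · exact absurd (h.ψf p hp) k
        · exact absurd n (h.fgne hq (h.yne i))
        · exact absurd m (h.fgne hp (h.yne i))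
      · intro k
        left
        rw [h.φf p hp, h.φf q hq]
        exact ⟨hp, hq, k⟩
    · intro p q hp hq
      constructor
      · rintro (⟨k, l, m⟩ | ⟨k, l, m⟩ | ⟨i, k, ⟨m, n⟩ | ⟨m, n⟩⟩)
        · exact absurd (h.φg p hp) k
        · rwa [h.ψg p hp, h.ψg q hq] at m
        · exact absurd m.symm (h.fgne (h.xne i) hp)
        · exact absurd n.symm (h.fgne (h.xne i) hq)
      · intro k
        right; left
        rw [h.ψg p hp, h.ψg q hq]
        exact ⟨hp, hq, k⟩
    · intro p q hp hq
      constructor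
      · rintro (⟨k, l, m⟩ | ⟨k, l, m⟩ | ⟨i, k, ⟨m, n⟩ | ⟨m, n⟩⟩)
        · exact absurd (h.φg q hq) l
        · exact absurd (h.ψf p hp) k
        · exact ⟨i, h.finj hp (h.xne i) m, h.symm.finj hq (h.yne i) n, k⟩
        · exact absurd m (h.fgne hp (h.yne i))
      · rintro ⟨i, rfl, rfl, k⟩
        exact Or.inr (Or.inr ⟨i, k, Or.inl ⟨rfl, rfl⟩⟩)
  refine ⟨F, ?_, sF⟩
  intro a b hab
  rcases h.cover a with ⟨r, hr, rfl⟩ | ⟨r, hr, rfl⟩ <;>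
  rcases h.cover b with ⟨t, ht, rfl⟩ | ⟨t, ht, rfl⟩
  · exact (s.ff r t hr ht).2 (h1 ((sF.ff r t hr ht).1 hab))
  · obtain ⟨i, rfl, rfl, k⟩ := (sF.fg r t hr ht).1 hab
    exact (s.fg _ _ hr ht).2 ⟨i, rfl, rfl, h1 k⟩
  · obtain ⟨i, rfl, rfl, k⟩ := (sF.fg t r ht hr).1 hab.symm
    exact ((s.fg _ _ ht hr).2 ⟨i, rfl, rfl, h1 k⟩).symm
  · exact (s.gg r t hr ht).2 (h2 ((sF.gg r t hr ht).1 hab))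

/-- One-sided restriction. -/
theorem exists_side (h : Frame f g φ ψ y x xs ys) (s : IsStar f g y x xs ys G₁ G₂ G)
    (hF : F ≤ G) : ∃ H, H ≤ G₁ ∧ (∀ p q, p ≠ y → q ≠ y → (F.Adj (f p) (f q) ↔ H.Adj p q)) ∧
      (∀ i, H.Adj y (xs i) ↔ F.Adj (f (xs i)) (g (ys i))) := by
  let H : SimpleGraph V₁ :=
    { Adj := fun p q => (p ≠ y ∧ q ≠ y ∧ F.Adj (f p) (f q)) ∨
        (∃ i, F.Adj (f (xs i)) (g (ys i)) ∧ ((p = y ∧ q = xs i) ∨ (p = xs i ∧ q = y)))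
      symm := ⟨by
        rintro a b (⟨k, l, m⟩ | ⟨i, k, m⟩)
        · exact Or.inl ⟨l, k, m.symm⟩
        · exact Or.inr ⟨i, k, by tauto⟩⟩
      loopless := ⟨by
        rintro a (⟨k, l, m⟩ | ⟨i, k, ⟨m, n⟩ | ⟨m, n⟩⟩)
        · exact F.loopless.irrefl _ m
        · exact h.xne i (n.symm.trans m)
        · exact h.xne i (m.symm.trans n)⟩ }
  have hE : ∀ i, F.Adj (f (xs i)) (g (ys i)) → G₁.Adj y (xs i) := by
    intro i k
    obtain ⟨j, e, -, l⟩ := (s.fg _ _ (h.xne i) (h.yne i)).1 (hF k)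
    rwa [e]
  refine ⟨H, ?_, ?_, ?_⟩
  · rintro a b (⟨k, l, m⟩ | ⟨i, k, ⟨rfl, rfl⟩ | ⟨rfl, rfl⟩⟩)
    · exact (s.ff a b k l).1 (hF m)
    · exact hE i k
    · exact (hE i k).symm
  · intro p q hp hq
    constructor
    · intro k; exact Or.inl ⟨hp, hq, k⟩
    · rintro (⟨k, l, m⟩ | ⟨i, k, ⟨m, n⟩ | ⟨m, n⟩⟩)
      · exact m
      · exact absurd m hp
      · exact absurd n hq
  · intro i
    constructor
    · rintro (⟨k, l, m⟩ | ⟨j, k, ⟨m, n⟩ | ⟨m, n⟩⟩)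
      · exact absurd rfl k
      · rwa [h.xinj n]
      · exact absurd n (h.xne i)
    · intro k; exact Or.inr ⟨i, k, Or.inl ⟨rfl, rfl⟩⟩

theorem exists_restrict (h : Frame f g φ ψ y x xs ys) (s : IsStar f g y x xs ys G₁ G₂ G)
    (hF : F ≤ G) : ∃ H₁ H₂, H₁ ≤ G₁ ∧ H₂ ≤ G₂ ∧ IsStar f g y x xs ys H₁ H₂ F := by
  obtain ⟨H₁, a1, b1, c1⟩ := exists_side h s hF
  obtain ⟨H₂, a2, b2, c2⟩ := exists_side h.symm s.symm hF
  refine ⟨H₁, H₂, a1, a2, b1, b2, ?_, fun p k => s.n1 p (a1 k), fun p k => s.n2 p (a2 k), ?_⟩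
  · intro p q hp hq
    constructor
    · intro k
      obtain ⟨i, rfl, rfl, -⟩ := (s.fg _ _ hp hq).1 (hF k)
      exact ⟨i, rfl, rfl, (c1 i).2 k⟩
    · rintro ⟨i, rfl, rfl, k⟩
      exact (c1 i).1 k
  · intro i
    rw [c1, c2, F.adj_comm]

open Classical in
/-- Signed count of edges leaving `D`. -/
theorem count_gen [Fintype W] (hF : ∀ w, (F.neighborSet w).ncard = 2) (σ : W → ℤ)
    (hσ : ∀ a b, F.Adj a b → σ a = - σ b) (D : W → Prop) :
    ∑ a, ∑ b, (if D a ∧ ¬ D b ∧ F.Adj a b then σ a else 0) = 2 * ∑ a, if D a then σ a else 0 := by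
  have h1 : ∀ a, ∑ b, (if F.Adj a b then (1:ℤ) else 0) = 2 := by
    intro a
    have := hF a
    rw [Set.ncard_eq_toFinset_card'] at this
    rw [Finset.sum_boole]
    have e : (Finset.univ.filter fun b => F.Adj a b) = (F.neighborSet a).toFinset := by
      ext b; simp
    rw [e, this]; rfl
  have h2 : ∑ a, ∑ b, (if D a ∧ D b ∧ F.Adj a b then σ a else 0) = 0 := by
    have : ∑ a, ∑ b, (if D a ∧ D b ∧ F.Adj a b then σ a else 0)
        = - ∑ a, ∑ b, (if D a ∧ D b ∧ F.Adj a b then σ a else 0) := by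
      conv_lhs => rw [Finset.sum_comm]
      rw [← Finset.sum_neg_distrib]
      refine Finset.sum_congr rfl fun a _ => ?_
      rw [← Finset.sum_neg_distrib]
      refine Finset.sum_congr rfl fun b _ => ?_
      by_cases k : D a ∧ D b ∧ F.Adj a b
      · rw [if_pos k, if_pos ⟨k.2.1, k.1, k.2.2.symm⟩, hσ a b k.2.2, neg_neg]
      · rw [if_neg k, if_neg (fun l => k ⟨l.2.1, l.1, l.2.2.symm⟩), neg_zero]
    linarith
  suffices hs : ∑ a, ∑ b, (if D a ∧ ¬ D b ∧ F.Adj a b then σ a else 0)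
      + ∑ a, ∑ b, (if D a ∧ D b ∧ F.Adj a b then σ a else 0)
      = 2 * ∑ a, if D a then σ a else 0 by rwa [h2, add_zero] at hs
  rw [← Finset.sum_add_distrib, Finset.mul_sum]
  refine Finset.sum_congr rfl fun a _ => ?_
  rw [← Finset.sum_add_distrib]
  by_cases k : D a
  · rw [if_pos k, ← h1 a, Finset.sum_mul]
    refine Finset.sum_congr rfl fun b _ => ?_
    by_cases l : D b <;> by_cases m : F.Adj a b <;> simp [k, l, m]
  · simp [k]

open Classical in
/-- Signed count of cut edges in an `F`-closed set `C`. -/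
theorem count_cut [Fintype W] (h : Frame f g φ ψ y x xs ys)
    (s : IsStar f g y x xs ys H₁ H₂ F)
    (hF : ∀ w, (F.neighborSet w).ncard = 2) (σ : W → ℤ)
    (hσ : ∀ a b, F.Adj a b → σ a = - σ b) (C : W → Prop)
    (hC : ∀ a b, F.Adj a b → C a → C b) :
    ∑ i, (if H₁.Adj y (xs i) ∧ C (f (xs i)) then σ (f (xs i)) else 0)
      = 2 * ∑ a, if C a ∧ φ a ≠ y then σ a else 0 := by
  obtain ⟨D, hD⟩ : ∃ D : W → Prop, ∀ a, D a ↔ C a ∧ φ a ≠ y := ⟨_, fun a => Iff.rfl⟩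
  have e : (∑ a, if C a ∧ φ a ≠ y then σ a else 0) = ∑ a, if D a then σ a else 0 := by
    refine Finset.sum_congr rfl fun a _ => ?_
    by_cases k : D a
    · rw [if_pos k, if_pos ((hD a).1 k)]
    · rw [if_neg k, if_neg (fun l => k ((hD a).2 l))]
  rw [e, ← count_gen hF σ hσ D]
  have key : ∀ a b, (if D a ∧ ¬ D b ∧ F.Adj a b then σ a else 0)
      = ∑ i, if a = f (xs i) then (if b = g (ys i) then
        (if H₁.Adj y (xs i) ∧ C (f (xs i)) then σ (f (xs i)) else 0) else 0) else 0 := by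
    intro a b
    by_cases k : D a ∧ ¬ D b ∧ F.Adj a b
    · rw [if_pos k]
      rw [hD, hD] at k
      obtain ⟨⟨k1, k2⟩, k3, k4⟩ := k
      have k5 := hC a b k4 k1
      rcases h.cover a with ⟨r, hr, rfl⟩ | ⟨r, hr, rfl⟩
      swap
      · exact absurd (h.φg r hr) k2
      rcases h.cover b with ⟨t, ht, rfl⟩ | ⟨t, ht, rfl⟩
      · exact absurd ⟨k5, by rwa [h.φf t ht]⟩ k3
      obtain ⟨i, rfl, rfl, l⟩ := (s.fg r t hr ht).1 k4
      rw [Finset.sum_eq_single i]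
      · simp [l, k1]
      · intro j _ hj
        rw [if_neg]
        intro e
        exact hj (h.xinj (h.finj hr (h.xne j) e)).symm
      · simp
    · rw [if_neg k]
      symm
      apply Finset.sum_eq_zero
      intro i _
      split_ifs with e1 e2 e3
      · exfalso
        subst e1 e2
        apply k
        rw [hD, hD]
        refine ⟨⟨e3.2, by rw [h.φf _ (h.xne i)]; exact h.xne i⟩, fun l => l.2 (h.φg _ (h.yne i)), ?_⟩
        exact (s.fg _ _ (h.xne i) (h.yne i)).2 ⟨i, rfl, rfl, e3.1⟩
      all_goals rfl
  simp_rw [key]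
  symm
  calc _ = ∑ a, ∑ i, ∑ b, (if a = f (xs i) then (if b = g (ys i) then
        (if H₁.Adj y (xs i) ∧ C (f (xs i)) then σ (f (xs i)) else 0) else 0) else 0) :=
        Finset.sum_congr rfl fun a _ => Finset.sum_comm
    _ = ∑ i, ∑ a, ∑ b, (if a = f (xs i) then (if b = g (ys i) then
        (if H₁.Adj y (xs i) ∧ C (f (xs i)) then σ (f (xs i)) else 0) else 0) else 0) :=
        Finset.sum_comm
    _ = _ := by
        refine Finset.sum_congr rfl fun i _ => ?_
        rw [Finset.sum_eq_single (f (xs i))]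
        · rw [Finset.sum_eq_single (g (ys i))]
          · simp
          · intro b _ hb; simp [hb]
          · simp
        · intro b _ hb; simp [hb]
        · simp

/-- Every vertex of a side reaches a cut vertex. -/
theorem side (h : Frame f g φ ψ y x xs ys) (s : IsStar f g y x xs ys H₁ H₂ F)
    (h1 : H₁.Connected) (p : V₁) (hp : p ≠ y) :
    ∃ k, H₁.Adj y (xs k) ∧ F.Reachable (f p) (f (xs k)) := by
  obtain ⟨w⟩ := h1.preconnected p y
  induction w with
  | nil => exact absurd rfl hp
  | @cons a b c hab w ih =>
    by_cases hb : b = c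
    · subst hb
      obtain ⟨k, rfl⟩ := s.n1 a hab.symm
      exact ⟨k, hab.symm, Reachable.refl _⟩
    · obtain ⟨k, k1, k2⟩ := ih h s hb
      exact ⟨k, k1, ((s.ff a b hp hb).2 hab).reachable.trans k2⟩

theorem conn_glue [Fintype W] (h : Frame f g φ ψ y x xs ys)
    (s : IsStar f g y x xs ys H₁ H₂ F)
    (hF : ∀ w, (F.neighborSet w).ncard = 2) (σ : W → ℤ)
    (hσ : ∀ a b, F.Adj a b → σ a = - σ b) (h01 : ∀ a, σ a = 1 ∨ σ a = -1)
    (h1 : H₁.Connected) (h2 : H₂.Connected) (hS : {i | H₁.Adj y (xs i)}.ncard = 2) :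
    F.Connected := by
  classical
  obtain ⟨i, j, hij, hS⟩ := Set.ncard_eq_two.1 hS
  have hm : ∀ k, H₁.Adj y (xs k) ↔ k = i ∨ k = j := by
    intro k
    have := Set.ext_iff.1 hS k
    simpa using this
  have hi := (hm i).2 (Or.inl rfl)
  have hj := (hm j).2 (Or.inr rfl)
  have hcross : ∀ k, H₁.Adj y (xs k) → F.Reachable (f (xs k)) (g (ys k)) := fun k hk =>
    ((s.fg _ _ (h.xne k) (h.yne k)).2 ⟨k, rfl, rfl, hk⟩).reachable
  have hall : ∀ w, ∃ k, H₁.Adj y (xs k) ∧ F.Reachable w (f (xs k)) := by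
    intro w
    rcases h.cover w with ⟨r, hr, rfl⟩ | ⟨r, hr, rfl⟩
    · exact side h s h1 r hr
    · obtain ⟨k, k1, k2⟩ := side h.symm s.symm h2 r hr
      have k3 := (s.c k).2 k1
      exact ⟨k, k3, k2.trans (hcross k k3).symm⟩
  have hreach : F.Reachable (f (xs i)) (f (xs j)) := by
    by_contra hn
    have := count_cut h s hF σ hσ (fun a => F.Reachable (f (xs i)) a)
      (fun a b hab k => k.trans hab.reachable)
    rw [Finset.sum_eq_single i] at this
    · rw [if_pos ⟨hi, Reachable.refl _⟩] at this
      rcases h01 (f (xs i)) with e | e <;> rw [e] at this <;> omega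
    · intro k _ hk
      rw [if_neg]
      rintro ⟨k1, k2⟩
      rcases (hm k).1 k1 with rfl | rfl
      · exact hk rfl
      · exact hn k2
    · simp
  have hall' : ∀ w, F.Reachable w (f (xs i)) := by
    intro w
    obtain ⟨k, k1, k2⟩ := hall w
    rcases (hm k).1 k1 with rfl | rfl
    · exact k2
    · exact k2.trans hreach.symm
  have : Nonempty W := ⟨f y⟩
  exact Connected.mk fun a b => (hall' a).trans (hall' b).symm

theorem card_cut [Fintype W] (h : Frame f g φ ψ y x xs ys)
    (s : IsStar f g y x xs ys G₁ G₂ G) (σ : W → ℤ)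
    (hσ : ∀ a b, G.Adj a b → σ a = - σ b) (h01 : ∀ a, σ a = 1 ∨ σ a = -1)
    (hcut : ∀ i j : Fin 3, i ≠ j → ∃ F, IsTwoFactor G F ∧
      F.Adj (f (xs i)) (g (ys i)) ∧ F.Adj (f (xs j)) (g (ys j)))
    (hF : IsTwoFactor G F) : {i | F.Adj (f (xs i)) (g (ys i))}.ncard = 2 := by
  classical
  have key : ∀ F, IsTwoFactor G F →
      ∑ i, (if F.Adj (f (xs i)) (g (ys i)) then σ (f (xs i)) else 0)
        = 2 * ∑ a, if φ a ≠ y then σ a else 0 := by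
    intro F hF
    obtain ⟨H₁, H₂, a, b, sF⟩ := exists_restrict h s hF.1
    have := count_cut h sF hF.2 σ (fun a b k => hσ a b (hF.1 k)) (fun _ => True)
      (fun _ _ _ _ => trivial)
    simp only [and_true, true_and] at this
    rw [← this]
    refine Finset.sum_congr rfl fun i _ => ?_
    have : F.Adj (f (xs i)) (g (ys i)) ↔ H₁.Adj y (xs i) := by
      rw [sF.fg _ _ (h.xne i) (h.yne i)]
      constructor
      · rintro ⟨j, e, -, k⟩; rwa [e]
      · intro k; exact ⟨i, rfl, rfl, k⟩
    simp only [this]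
  obtain ⟨A, hA, A0, A1⟩ := hcut 0 1 (by decide)
  obtain ⟨B, hB, B0, B2⟩ := hcut 0 2 (by decide)
  obtain ⟨C, hC, C1, C2⟩ := hcut 1 2 (by decide)
  have kA := key A hA
  have kB := key B hB
  have kC := key C hC
  have kF := key F hF
  rw [Set.ncard_eq_toFinset_card', Set.toFinset_ofPred, Finset.card_filter]
  rw [Fin.sum_univ_three] at *
  simp only [A0, A1, B0, B2, C1, C2, if_true] at kA kB kC
  generalize (∑ a, if φ a ≠ y then σ a else 0) = d at *
  have e0 := h01 (f (xs 0))
  have e1 := h01 (f (xs 1))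
  have e2 := h01 (f (xs 2))
  clear key hcut
  generalize σ (f (xs 0)) = s0 at *
  generalize σ (f (xs 1)) = s1 at *
  generalize σ (f (xs 2)) = s2 at *
  split_ifs at * <;> omega

theorem cut_iff (h : Frame f g φ ψ y x xs ys) (sF : IsStar f g y x xs ys H₁ H₂ F) (i : Fin 3) :
    F.Adj (f (xs i)) (g (ys i)) ↔ H₁.Adj y (xs i) := by
  rw [sF.fg _ _ (h.xne i) (h.yne i)]
  constructor
  · rintro ⟨j, e, -, k⟩; rwa [e]
  · intro k; exact ⟨i, rfl, rfl, k⟩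

theorem forward [Fintype W] (h : Frame f g φ ψ y x xs ys)
    (s : IsStar f g y x xs ys G₁ G₂ G) (σ : W → ℤ)
    (hσ : ∀ a b, G.Adj a b → σ a = - σ b) (h01 : ∀ a, σ a = 1 ∨ σ a = -1)
    (hcut : ∀ i j : Fin 3, i ≠ j → ∃ F, IsTwoFactor G F ∧
      F.Adj (f (xs i)) (g (ys i)) ∧ F.Adj (f (xs j)) (g (ys j)))
    (hG : TwoFactorHamiltonian G) : TwoFactorHamiltonian G₁ := by
  constructor
  · obtain ⟨F, hF⟩ := hG.1
    have hc := card_cut h s σ hσ h01 hcut hF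
    obtain ⟨H₁, H₂, a, b, sF⟩ := exists_restrict h s hF.1
    simp only [cut_iff h sF] at hc
    exact ⟨H₁, a, two_reg_side h sF hF.2 hc⟩
  · intro F₁ hF₁
    have hy := hF₁.2 y
    rw [deg_y h (fun p k => s.n1 p (hF₁.1 k))] at hy
    obtain ⟨i, j, hij, hS⟩ := Set.ncard_eq_two.1 hy
    obtain ⟨F, hF, Fi, Fj⟩ := hcut i j hij
    have hc := card_cut h s σ hσ h01 hcut hF
    obtain ⟨H₁, H₂, a, b, sF⟩ := exists_restrict h s hF.1
    have hsub : ({i, j} : Set (Fin 3)) = {k | F.Adj (f (xs k)) (g (ys k))} := by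
      apply Set.eq_of_subset_of_ncard_le
      · rintro k (rfl | rfl)
        · exact Fi
        · exact Fj
      · rw [hc, Set.ncard_pair hij]
      · exact Set.toFinite _
    have hcc : ∀ k, F₁.Adj y (xs k) ↔ H₂.Adj x (ys k) := by
      intro k
      rw [← sF.c, ← cut_iff h sF]
      exact Set.ext_iff.1 (hS.trans hsub) k
    obtain ⟨F', hF', s'⟩ := exists_glue h s hF₁.1 b hcc
    have hc2 : {i | H₂.Adj x (ys i)}.ncard = 2 := by
      simp only [← hcc]; exact hy
    have r2 := two_reg_side h.symm sF.symm hF.2 hc2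
    exact conn_side h s' (hG.2 F' ⟨hF', two_reg h s' hF₁.2 r2⟩)

theorem backward [Fintype W] (h : Frame f g φ ψ y x xs ys)
    (s : IsStar f g y x xs ys G₁ G₂ G) (σ : W → ℤ)
    (hσ : ∀ a b, G.Adj a b → σ a = - σ b) (h01 : ∀ a, σ a = 1 ∨ σ a = -1)
    (hcut : ∀ i j : Fin 3, i ≠ j → ∃ F, IsTwoFactor G F ∧
      F.Adj (f (xs i)) (g (ys i)) ∧ F.Adj (f (xs j)) (g (ys j)))
    (hG₁ : TwoFactorHamiltonian G₁) (hG₂ : TwoFactorHamiltonian G₂) :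
    TwoFactorHamiltonian G := by
  constructor
  · obtain ⟨F, hF, -⟩ := hcut 0 1 (by decide)
    exact ⟨F, hF⟩
  · intro F hF
    have hc := card_cut h s σ hσ h01 hcut hF
    obtain ⟨H₁, H₂, a, b, sF⟩ := exists_restrict h s hF.1
    simp only [cut_iff h sF] at hc
    have hc2 : {i | H₂.Adj x (ys i)}.ncard = 2 := by
      simp only [← sF.c]; exact hc
    exact conn_glue h sF hF.2 σ (fun a b k => hσ a b (hF.1 k)) h01
      (hG₁.2 _ ⟨a, two_reg_side h sF hF.2 hc⟩)
      (hG₂.2 _ ⟨b, two_reg_side h.symm sF.symm hF.2 hc2⟩) hc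

end

end StarProd

/-- let `y` be a vertex of degree 3 of `G₁` with neighbours
`xs 0, xs 1, xs 2`, let `x` be a vertex of degree 3 of `G₂` with neighbours
`ys 0, ys 1, ys 2`, and let `G` be the star product `(G₁, y) * (G₂, x)`, i.e. the graph
on `(V₁ ⊕ V₂) \ {inl y, inr x}` obtained from the disjoint union of `G₁ - y` and
`G₂ - x` by adding the three edges `xs i — ys i` (forming the 3-edge-cut `X`).
If `G` is bipartite and every pair of edges of `X` lies in a common 2-factor of `G`,
then `G` is 2-factor Hamiltonian iff both `G₁` and `G₂` are 2-factor Hamiltonian. -/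
theorem stmt_1 {V₁ V₂ : Type*} [Fintype V₁] [Fintype V₂]
    (G₁ : SimpleGraph V₁) (G₂ : SimpleGraph V₂) (y : V₁) (x : V₂)
    (xs : Fin 3 → V₁) (ys : Fin 3 → V₂)
    (hxs : Function.Injective xs) (hys : Function.Injective ys)
    (hdegy : G₁.neighborSet y = Set.range xs)
    (hdegx : G₂.neighborSet x = Set.range ys)
    (G : SimpleGraph {a : V₁ ⊕ V₂ // a ≠ Sum.inl y ∧ a ≠ Sum.inr x})
    (hG : ∀ a b : {a : V₁ ⊕ V₂ // a ≠ Sum.inl y ∧ a ≠ Sum.inr x}, G.Adj a b ↔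
      ((∃ p q : V₁, a.1 = Sum.inl p ∧ b.1 = Sum.inl q ∧ G₁.Adj p q) ∨
       (∃ p q : V₂, a.1 = Sum.inr p ∧ b.1 = Sum.inr q ∧ G₂.Adj p q) ∨
       (∃ i : Fin 3, (a.1 = Sum.inl (xs i) ∧ b.1 = Sum.inr (ys i)) ∨
                     (a.1 = Sum.inr (ys i) ∧ b.1 = Sum.inl (xs i)))))
    (hbip : G.Colorable 2)
    (hcut : ∀ i j : Fin 3, i ≠ j → ∃ F, IsTwoFactor G F ∧
      (∃ a b, a.1 = Sum.inl (xs i) ∧ b.1 = Sum.inr (ys i) ∧ F.Adj a b) ∧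
      (∃ a b, a.1 = Sum.inl (xs j) ∧ b.1 = Sum.inr (ys j) ∧ F.Adj a b)) :
    TwoFactorHamiltonian G ↔ (TwoFactorHamiltonian G₁ ∧ TwoFactorHamiltonian G₂) := by
  classical
  have xne : ∀ i, xs i ≠ y := by
    intro i e
    have : xs i ∈ G₁.neighborSet y := by rw [hdegy]; exact ⟨i, rfl⟩
    rw [mem_neighborSet, e] at this
    exact G₁.loopless.irrefl _ this
  have yne : ∀ i, ys i ≠ x := by
    intro i e
    have : ys i ∈ G₂.neighborSet x := by rw [hdegx]; exact ⟨i, rfl⟩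
    rw [mem_neighborSet, e] at this
    exact G₂.loopless.irrefl _ this
  have ay : ∀ p, G₁.Adj y p ↔ ∃ i, xs i = p := fun p => Set.ext_iff.1 hdegy p
  have ax : ∀ p, G₂.Adj x p ↔ ∃ i, ys i = p := fun p => Set.ext_iff.1 hdegx p
  let W := {a : V₁ ⊕ V₂ // a ≠ Sum.inl y ∧ a ≠ Sum.inr x}
  let f : V₁ → W := fun p => if hp : p = y then ⟨Sum.inl (xs 0), by simp [xne]⟩
    else ⟨Sum.inl p, by simp [hp]⟩
  let g : V₂ → W := fun p => if hp : p = x then ⟨Sum.inr (ys 0), by simp [yne]⟩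
    else ⟨Sum.inr p, by simp [hp]⟩
  have fval : ∀ p, p ≠ y → (f p).1 = Sum.inl p := fun p hp => by simp [f, hp]
  have gval : ∀ p, p ≠ x → (g p).1 = Sum.inr p := fun p hp => by simp [g, hp]
  have hfr : StarProd.Frame f g (fun w : W => Sum.elim id (fun _ => y) w.1)
      (fun w : W => Sum.elim (fun _ => x) id w.1) y x xs ys := by
    refine ⟨?_, ?_, ?_, ?_, ?_, hxs, hys, xne, yne⟩
    · intro p hp; simp [fval p hp]
    · intro p hp; simp [gval p hp]
    · intro p hp; simp [fval p hp]
    · intro p hp; simp [gval p hp]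
    · rintro ⟨p | p, h1, h2⟩
      · have : p ≠ y := fun e => h1 (by rw [e])
        exact Or.inl ⟨p, this, Subtype.ext (fval p this).symm⟩
      · have : p ≠ x := fun e => h2 (by rw [e])
        exact Or.inr ⟨p, this, Subtype.ext (gval p this).symm⟩
  have hst : StarProd.IsStar f g y x xs ys G₁ G₂ G := by
    refine ⟨?_, ?_, ?_, ?_, ?_, ?_⟩
    · intro p q hp hq
      rw [hG, fval p hp, fval q hq]; simp
    · intro p q hp hq
      rw [hG, gval p hp, gval q hq]; simp
    · intro p q hp hq
      rw [hG, fval p hp, gval q hq]; simp [ay]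
    · intro p k; obtain ⟨i, e⟩ := (ay p).1 k; exact ⟨i, e.symm⟩
    · intro p k; obtain ⟨i, e⟩ := (ax p).1 k; exact ⟨i, e.symm⟩
    · intro i
      rw [ay, ax]
      exact ⟨fun _ => ⟨i, rfl⟩, fun _ => ⟨i, rfl⟩⟩
  have hcut' : ∀ i j : Fin 3, i ≠ j → ∃ F, IsTwoFactor G F ∧
      F.Adj (f (xs i)) (g (ys i)) ∧ F.Adj (f (xs j)) (g (ys j)) := by
    intro i j hij
    obtain ⟨F, hF, ⟨a, b, ha, hb, k⟩, ⟨c, d, hc, hd, l⟩⟩ := hcut i j hij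
    have ea : a = f (xs i) := Subtype.ext (ha.trans (fval _ (xne i)).symm)
    have eb : b = g (ys i) := Subtype.ext (hb.trans (gval _ (yne i)).symm)
    have ec : c = f (xs j) := Subtype.ext (hc.trans (fval _ (xne j)).symm)
    have ed : d = g (ys j) := Subtype.ext (hd.trans (gval _ (yne j)).symm)
    subst ea eb ec ed
    exact ⟨F, hF, k, l⟩
  have hcut'' : ∀ i j : Fin 3, i ≠ j → ∃ F, IsTwoFactor G F ∧
      F.Adj (g (ys i)) (f (xs i)) ∧ F.Adj (g (ys j)) (f (xs j)) := by
    intro i j hij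
    obtain ⟨F, hF, k, l⟩ := hcut' i j hij
    exact ⟨F, hF, k.symm, l.symm⟩
  obtain ⟨col⟩ := hbip
  let σ : W → ℤ := fun w => if col w = 0 then 1 else -1
  have h01 : ∀ a, σ a = 1 ∨ σ a = -1 := by
    intro a
    by_cases e : col a = 0 <;> simp [σ, e]
  have hσ : ∀ a b, G.Adj a b → σ a = - σ b := by
    intro a b hab
    have := col.valid hab
    simp only [σ]
    split_ifs with e1 e2 e2
    · exact absurd (e1.trans e2.symm) this
    · rfl
    · rfl
    · omega
  constructor
  · intro h
    exact ⟨StarProd.forward hfr hst σ hσ h01 hcut' h,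
      StarProd.forward hfr.symm hst.symm σ hσ h01 hcut'' h⟩
  · rintro ⟨h1, h2⟩
    exact StarProd.backward hfr hst σ hσ h01 hcut' h1 h2
end

section
/- Let G be a 2-factor Hamiltonian cubic bipartite graph. Then G is 3-connected and the number of vertices of G satisfies |V(G)| ≡ 2 (mod 4). -/
open SimpleGraph

/-- `G` is 3-connected: it has more than 3 vertices and deleting any set of fewer
than 3 vertices leaves it connected. -/
def ThreeConnected {V : Type*} [Fintype V] (G : SimpleGraph V) : Prop :=
  3 < Fintype.card V ∧ ∀ S : Set V, S.ncard < 3 → (G.induce (Sᶜ : Set V)).Connected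

/-- Hall: a regular graph of positive degree has an injective choice of neighbours. -/
lemma exists_perm_adj {V : Type*} [Fintype V] (H : SimpleGraph V) (d : ℕ)
    (hd : ∀ v : V, (H.neighborSet v).ncard = d + 1) :
    ∃ f : Equiv.Perm V, ∀ v, H.Adj v (f v) := by
  classical
  have hdeg : ∀ v, (H.neighborFinset v).card = d + 1 := by
    intro v
    rw [← hd v, Set.ncard_eq_toFinset_card']
    rfl
  have hall : ∀ s : Finset V, s.card ≤ (s.biUnion (fun v => H.neighborFinset v)).card := by
    intro s
    have h := Finset.card_mul_le_card_mul (s := s)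
      (t := s.biUnion (fun v => H.neighborFinset v)) (m := d + 1) (n := d + 1) H.Adj
      (by
        intro a ha
        rw [← hdeg a]
        apply Finset.card_le_card
        intro w hw
        rw [Finset.mem_bipartiteAbove]
        exact ⟨Finset.mem_biUnion.2 ⟨a, ha, hw⟩, by simpa using hw⟩)
      (by
        intro b hb
        rw [← hdeg b]
        apply Finset.card_le_card
        intro w hw
        rw [Finset.mem_bipartiteBelow] at hw
        simpa using hw.2.symm)
    exact Nat.le_of_mul_le_mul_right h (Nat.succ_pos d)
  obtain ⟨f, hf, hf'⟩ := (Finset.all_card_le_biUnion_card_iff_exists_injective _).1 hall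
  refine ⟨Equiv.ofBijective f (Finite.injective_iff_bijective.1 hf), fun v => ?_⟩
  simpa using hf' v

/-- Remove a perfect matching (an involution) from a regular bipartite graph. -/
lemma peel {V : Type*} [Fintype V] (H : SimpleGraph V) (d : ℕ)
    (hd : ∀ v : V, (H.neighborSet v).ncard = d + 1) (c : V → Fin 2)
    (hc : ∀ v w, H.Adj v w → c v ≠ c w) :
    ∃ (m : V → V) (H' : SimpleGraph V), (∀ v, m (m v) = v) ∧
      (∀ v w, H.Adj v w ↔ (m v = w ∨ H'.Adj v w)) ∧ (∀ v, ¬ H'.Adj v (m v)) ∧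
      (∀ v : V, (H'.neighborSet v).ncard = d) := by
  classical
  obtain ⟨f, hf⟩ := exists_perm_adj H d hd
  have hf2 : ∀ v, H.Adj v (f.symm v) := fun v => by
    have := hf (f.symm v)
    rw [Equiv.apply_symm_apply] at this
    exact this.symm
  let m : V → V := fun v => if c v = 0 then f v else f.symm v
  have hmadj : ∀ v, H.Adj v (m v) := by
    intro v
    by_cases h : c v = 0
    · simpa [m, h] using hf v
    · simpa [m, h] using hf2 v
  have hmm : ∀ v, m (m v) = v := by
    intro v
    by_cases h : c v = 0
    · have h2 : c (f v) ≠ 0 := fun h3 => hc _ _ (hf v) (h.trans h3.symm)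
      simp [m, h, h2]
    · have h2 : c (f.symm v) = 0 := by
        have := hc _ _ (hf2 v)
        omega
      simp [m, h, h2]
  let H' : SimpleGraph V :=
    { Adj := fun v w => H.Adj v w ∧ m v ≠ w
      symm := ⟨fun v w h => ⟨h.1.symm, fun h2 => h.2 (by rw [← h2, hmm])⟩⟩
      loopless := ⟨fun v h => H.loopless.irrefl v h.1⟩ }
  refine ⟨m, H', hmm, ?_, ?_, ?_⟩
  · intro v w
    constructor
    · intro h
      by_cases h2 : m v = w
      · exact Or.inl h2
      · exact Or.inr ⟨h, h2⟩
    · rintro (h | h)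
      · exact h ▸ hmadj v
      · exact h.1
  · intro v h
    exact h.2 rfl
  · intro v
    have : H'.neighborSet v = H.neighborSet v \ {m v} := by
      ext w
      simp only [mem_neighborSet, Set.mem_sdiff, Set.mem_singleton_iff]
      exact ⟨fun h => ⟨h.1, fun h2 => h.2 h2.symm⟩, fun h => ⟨h.1, fun h2 => h.2 h2.symm⟩⟩
    rw [this, Set.ncard_sdiff_singleton_of_mem (by simpa using hmadj v), hd v]
    simp

lemma exists_three {V : Type*} [Fintype V] (G : SimpleGraph V)
    (hcubic : ∀ v : V, (G.neighborSet v).ncard = 3) (c : V → Fin 2)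
    (hc : ∀ v w, G.Adj v w → c v ≠ c w) :
    ∃ m : Fin 3 → V → V, (∀ i v, m i (m i v) = v) ∧ (∀ i j v, i ≠ j → m i v ≠ m j v) ∧
      (∀ v w, G.Adj v w ↔ ∃ i, m i v = w) := by
  obtain ⟨m0, H1, a0, b0, c0, d0⟩ := peel G 2 hcubic c hc
  obtain ⟨m1, H2, a1, b1, c1, d1⟩ := peel H1 1 d0 c
    (fun v w h => hc v w ((b0 v w).2 (Or.inr h)))
  obtain ⟨m2, H3, a2, b2, c2, d2⟩ := peel H2 0 d1 c
    (fun v w h => hc v w ((b0 v w).2 (Or.inr ((b1 v w).2 (Or.inr h)))))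
  have h3 : ∀ v w, ¬ H3.Adj v w := by
    intro v w h
    have h2 := d2 v
    rw [Set.ncard_eq_zero] at h2
    have h4 : w ∈ H3.neighborSet v := h
    rw [h2] at h4
    exact h4
  have n01 : ∀ v, m0 v ≠ m1 v := fun v h => c0 v ((b1 _ _).2 (Or.inl h.symm))
  have n02 : ∀ v, m0 v ≠ m2 v := fun v h =>
    c0 v ((b1 _ _).2 (Or.inr ((b2 _ _).2 (Or.inl h.symm))))
  have n12 : ∀ v, m1 v ≠ m2 v := fun v h => c1 v ((b2 _ _).2 (Or.inl h.symm))
  refine ⟨![m0, m1, m2], ?_, ?_, ?_⟩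
  · intro i v
    fin_cases i
    · exact a0 v
    · exact a1 v
    · exact a2 v
  · intro i j v hij
    fin_cases i <;> fin_cases j
    · exact absurd rfl hij
    · exact n01 v
    · exact n02 v
    · exact (n01 v).symm
    · exact absurd rfl hij
    · exact n12 v
    · exact (n02 v).symm
    · exact (n12 v).symm
    · exact absurd rfl hij
  · intro v w
    rw [b0, b1, b2]
    constructor
    · rintro (h | h | h | h)
      · exact ⟨0, h⟩
      · exact ⟨1, h⟩
      · exact ⟨2, h⟩
      · exact absurd h (h3 _ _)
    · rintro ⟨i, h⟩
      fin_cases i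
      · exact Or.inl h
      · exact Or.inr (Or.inl h)
      · exact Or.inr (Or.inr (Or.inl h))

/-- A nonempty set closed under two of the matchings is everything. -/
lemma closed_univ {V : Type*} (G : SimpleGraph V)
    (h2fh : TwoFactorHamiltonian G) (m : Fin 3 → V → V) (hinv : ∀ i v, m i (m i v) = v)
    (hne : ∀ i j v, i ≠ j → m i v ≠ m j v) (hadj : ∀ v w, G.Adj v w ↔ ∃ i, m i v = w)
    (i j : Fin 3) (hij : i ≠ j) (Z : Set V) (hi : ∀ z ∈ Z, m i z ∈ Z) (hj : ∀ z ∈ Z, m j z ∈ Z)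
    (x : V) (hx : x ∈ Z) (y : V) : y ∈ Z := by
  have hflip : ∀ i v w, m i v = w → m i w = v := fun i v w h => by rw [← h, hinv]
  let F : SimpleGraph V :=
    { Adj := fun v w => m i v = w ∨ m j v = w
      symm := ⟨fun v w h => h.imp (hflip _ _ _) (hflip _ _ _)⟩
      loopless := ⟨fun v h => G.loopless.irrefl v
        ((hadj v v).2 (h.elim (fun h => ⟨i, h⟩) (fun h => ⟨j, h⟩)))⟩ }
  have hF : IsTwoFactor G F := by
    refine ⟨fun v w h => (hadj v w).2 (h.elim (fun h => ⟨i, h⟩) (fun h => ⟨j, h⟩)), fun v => ?_⟩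
    have : F.neighborSet v = {m i v, m j v} := by
      ext w
      simp only [mem_neighborSet, Set.mem_insert_iff, Set.mem_singleton_iff]
      exact ⟨fun h => h.imp Eq.symm Eq.symm, fun h => h.imp Eq.symm Eq.symm⟩
    rw [this, Set.ncard_pair (hne i j v hij)]
  obtain ⟨p⟩ := (h2fh.2 F hF).preconnected x y
  induction p with
  | nil => exact hx
  | cons h p ih =>
    apply ih
    rcases h with h | h
    · exact h ▸ hi _ hx
    · exact h ▸ hj _ hx

lemma even_of_closed {V : Type*} [DecidableEq V] (m : V → V) (hinv : ∀ v, m (m v) = v)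
    (hfix : ∀ v, m v ≠ v) (Z : Finset V) (hZ : ∀ z ∈ Z, m z ∈ Z) : Even Z.card := by
  have h : ∑ _z ∈ Z, (1 : ZMod 2) = 0 :=
    Finset.sum_involution (fun a _ => m a) (fun _ _ => by decide) (fun a _ _ => hfix a)
      (fun a ha => hZ a ha) (fun a _ => hinv a)
  rw [Finset.sum_const, nsmul_one] at h
  exact (ZMod.natCast_eq_zero_iff_even).1 h

lemma no_sep {V : Type*} [Fintype V] (G : SimpleGraph V)
    (h2fh : TwoFactorHamiltonian G) (m : Fin 3 → V → V) (hinv : ∀ i v, m i (m i v) = v)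
    (hne : ∀ i j v, i ≠ j → m i v ≠ m j v) (hadj : ∀ v w, G.Adj v w ↔ ∃ i, m i v = w)
    (S X : Finset V) (hS : S.card ≤ 2) (hXS : Disjoint X S)
    (hcl : ∀ x ∈ X, ∀ w, G.Adj x w → w ∈ X ∨ w ∈ S)
    (x y : V) (hx : x ∈ X) (hyX : y ∉ X) (hyS : y ∉ S) : False := by
  classical
  let T : Fin 3 → Finset V := fun i => S.filter (fun s => m i s ∈ X)
  have hTS : ∀ i, T i ⊆ S := fun i => Finset.filter_subset _ _
  have hfix : ∀ i v, m i v ≠ v := fun i v h => G.loopless.irrefl v ((hadj v v).2 ⟨i, h⟩)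
  have hclosed : ∀ i, ∀ z ∈ X ∪ T i, m i z ∈ X ∪ T i := by
    intro i z hz
    rw [Finset.mem_union] at hz ⊢
    rcases hz with hz | hz
    · rcases hcl z hz (m i z) ((hadj _ _).2 ⟨i, rfl⟩) with h | h
      · exact Or.inl h
      · exact Or.inr (Finset.mem_filter.2 ⟨h, by rwa [hinv]⟩)
    · exact Or.inl (Finset.mem_filter.1 hz).2
  have heven : ∀ i, Even (X.card + (T i).card) := by
    intro i
    rw [← Finset.card_union_of_disjoint (Finset.disjoint_of_subset_right (hTS i) hXS)]
    exact even_of_closed (m i) (hinv i) (hfix i) _ (hclosed i)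
  have hdiff : ∀ i j, i ≠ j → T i ≠ T j := by
    intro i j hij hT
    have hy := closed_univ G h2fh m hinv hne hadj i j hij (↑(X ∪ T i))
      (fun z hz => by exact_mod_cast hclosed i z (by exact_mod_cast hz))
      (fun z hz => by
        have := hclosed j z (by rw [← hT]; exact_mod_cast hz)
        rw [← hT] at this
        exact_mod_cast this) x (by simp [hx]) y
    rw [Finset.mem_coe, Finset.mem_union] at hy
    exact hy.elim hyX (fun h => hyS (hTS i h))
  have hcompl : ∀ i j, i ≠ j → T j = S \ T i := by
    intro i j hij
    have h1 := hdiff i j hij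
    have e1 := heven i
    have e2 := heven j
    have l1 := Finset.card_le_card (hTS i)
    have l2 := Finset.card_le_card (hTS j)
    have hs : (S \ T i).card = S.card - (T i).card := Finset.card_sdiff_of_subset (hTS i)
    -- same parity
    have hpar : (T i).card % 2 = (T j).card % 2 := by
      rw [Nat.even_iff] at e1 e2
      omega
    by_cases hz : (T i).card = 0
    · have hz' : T i = ∅ := Finset.card_eq_zero.1 hz
      have : (T j).card ≠ 0 := fun h => h1 (by rw [hz', Finset.card_eq_zero.1 h])
      rw [hz', Finset.sdiff_empty]
      exact Finset.eq_of_subset_of_card_le (hTS j) (by omega)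
    by_cases ht : (T i).card = 2
    · have hz' : T i = S := Finset.eq_of_subset_of_card_le (hTS i) (by omega)
      have : (T j).card ≠ 2 := fun h => h1 (by
        rw [hz']; exact (Finset.eq_of_subset_of_card_le (hTS j) (by omega)).symm)
      rw [hz', Finset.sdiff_self]
      exact Finset.card_eq_zero.1 (by omega)
    have c1 : (T i).card = 1 := by omega
    have c2 : (T j).card = 1 := by omega
    obtain ⟨a, ha⟩ := Finset.card_eq_one.1 c1
    obtain ⟨b, hb⟩ := Finset.card_eq_one.1 c2
    apply Finset.eq_of_subset_of_card_le
    · intro w hw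
      rw [Finset.mem_sdiff]
      refine ⟨hTS j hw, fun hw2 => h1 ?_⟩
      rw [ha, Finset.mem_singleton] at hw2
      rw [hb, Finset.mem_singleton] at hw
      rw [ha, hb, ← hw, ← hw2]
    · omega
  exact hdiff 1 2 (by decide)
    ((hcompl 0 1 (by decide)).trans (hcompl 0 2 (by decide)).symm)

lemma card_mod {V : Type*} [Fintype V] (G : SimpleGraph V) (c : V → Fin 2)
    (hc : ∀ v w, G.Adj v w → c v ≠ c w)
    (h2fh : TwoFactorHamiltonian G) (m : Fin 3 → V → V) (hinv : ∀ i v, m i (m i v) = v)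
    (hne : ∀ i j v, i ≠ j → m i v ≠ m j v) (hadj : ∀ v w, G.Adj v w ↔ ∃ i, m i v = w) :
    Fintype.card V % 4 = 2 := by
  classical
  have hmc : ∀ i v, c (m i v) ≠ c v := fun i v => (hc v _ ((hadj _ _).2 ⟨i, rfl⟩)).symm
  have hm01 : ∀ i v, c (m i v) = 0 ↔ ¬ c v = 0 := by
    intro i v
    have := hmc i v
    omega
  let M : Fin 3 → Equiv.Perm V := fun i => ⟨m i, m i, hinv i, hinv i⟩
  let A := {v : V // c v = 0}
  have hpres : ∀ i j v, c ((M i * M j) v) = 0 ↔ c v = 0 := by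
    intro i j v
    change c (m i (m j v)) = 0 ↔ _
    rw [hm01, hm01, not_not]
  let σ : Fin 3 → Fin 3 → Equiv.Perm A := fun i j =>
    (M i * M j).subtypePerm (hpres i j)
  have hσ : ∀ i j (a : A), ((σ i j a : A) : V) = m i (m j a) := fun i j a => rfl
  have hσinv : ∀ i j (a : A), (((σ i j)⁻¹ a : A) : V) = m j (m i a) := by
    intro i j a
    have : (σ i j)⁻¹ a = σ j i a := by
      rw [Equiv.Perm.inv_eq_iff_eq]
      apply Subtype.ext
      rw [hσ, hσ, hinv, hinv]
    rw [this, hσ]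
  have hmove : ∀ i j, i ≠ j → ∀ a, σ i j a ≠ a := by
    intro i j hij a h
    have h2 := congrArg Subtype.val h
    rw [hσ] at h2
    apply hne i j a hij
    rw [← h2, hinv, h2]
  have hsame : ∀ i j, i ≠ j → ∀ a b : A, (σ i j).SameCycle a b := by
    intro i j hij a b
    let Z : Set V := {v | (∃ h : c v = 0, (σ i j).SameCycle a ⟨v, h⟩) ∨
      (∃ h : c (m i v) = 0, (σ i j).SameCycle a ⟨m i v, h⟩)}
    have hb := closed_univ G h2fh m hinv hne hadj i j hij Z (by
        rintro z (⟨h, hz⟩ | ⟨h, hz⟩)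
        · right
          refine ⟨by rwa [hinv], ?_⟩
          convert hz using 2
          exact hinv i z
        · exact Or.inl ⟨h, hz⟩) (by
        rintro z (⟨h, hz⟩ | ⟨h, hz⟩)
        · right
          refine ⟨(hpres i j z).2 h, ?_⟩
          exact Equiv.Perm.sameCycle_apply_right.2 hz
        · left
          have hz0 : c (m j z) = 0 := by
            rw [hm01] at h ⊢
            exact h
          refine ⟨hz0, ?_⟩
          have h3 : (σ i j).SameCycle a ((σ i j)⁻¹ ⟨m i z, h⟩) :=
            Equiv.Perm.sameCycle_apply_right.1 (by rwa [← Equiv.Perm.mul_apply, mul_inv_cancel, Equiv.Perm.one_apply])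
          convert h3 using 1
          apply Subtype.ext
          rw [hσinv, hinv]) a (Or.inl ⟨a.2, Equiv.Perm.SameCycle.refl _ _⟩) b
    rcases hb with ⟨h, hz⟩ | ⟨h, hz⟩
    · exact hz
    · exact absurd b.2 ((hm01 i b).1 h)
  have hnonempty : Nonempty V := by
    obtain ⟨F, hF⟩ := h2fh.1
    exact (h2fh.2 F hF).nonempty
  have hA : Nonempty A := by
    obtain ⟨v⟩ := hnonempty
    by_cases h : c v = 0
    · exact ⟨⟨v, h⟩⟩
    · exact ⟨⟨m 0 v, (hm01 0 v).2 h⟩⟩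
  have hsign : ∀ i j, i ≠ j →
      Equiv.Perm.sign (σ i j) = -(-1) ^ (Fintype.card A) := by
    intro i j hij
    obtain ⟨a⟩ := hA
    have hcyc : (σ i j).IsCycle := ⟨a, hmove i j hij a, fun b _ => hsame i j hij a b⟩
    rw [hcyc.sign]
    have : (σ i j).support = Finset.univ := by
      ext b
      simp [hmove i j hij b]
    rw [this, Finset.card_univ]
  have hmul : σ 0 1 * σ 1 2 = σ 0 2 := by
    ext a
    rw [Equiv.Perm.mul_apply, hσ, hσ, hσ, hinv]
  have hs := congrArg Equiv.Perm.sign hmul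
  rw [map_mul, hsign 0 1 (by decide), hsign 1 2 (by decide), hsign 0 2 (by decide)] at hs
  have hodd : Odd (Fintype.card A) := by
    by_contra h
    rw [Nat.not_odd_iff_even] at h
    rw [h.neg_one_pow] at hs
    revert hs
    decide
  have hcompl : Fintype.card {v : V // ¬ c v = 0} = Fintype.card A :=
    Fintype.card_congr
      { toFun := fun v => ⟨m 0 v, (hm01 0 v).2 v.2⟩
        invFun := fun v => ⟨m 0 v, fun h => (hm01 0 v).1 h v.2⟩
        left_inv := fun v => Subtype.ext (hinv 0 v)
        right_inv := fun v => Subtype.ext (hinv 0 v) }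
  have htot := Fintype.card_subtype_compl (fun v : V => c v = 0)
  have hle := Fintype.card_subtype_le (fun v : V => c v = 0)
  have hA' : Fintype.card A = Fintype.card {v : V // c v = 0} := rfl
  rw [Nat.odd_iff] at hodd
  omega

/-- a 2-factor Hamiltonian cubic bipartite graph is 3-connected and its
number of vertices is congruent to 2 modulo 4. -/
theorem stmt_2 {V : Type*} [Fintype V] (G : SimpleGraph V)
    (hcubic : ∀ v : V, (G.neighborSet v).ncard = 3)
    (hbip : G.Colorable 2)
    (h2fh : TwoFactorHamiltonian G) :
    ThreeConnected G ∧ Fintype.card V % 4 = 2 := by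
  classical
  obtain ⟨C⟩ := hbip
  have hc : ∀ v w, G.Adj v w → C v ≠ C w := fun v w h => C.valid h
  obtain ⟨m, hinv, hne, hadj⟩ := exists_three G hcubic C hc
  have hnonempty : Nonempty V := by
    obtain ⟨F, hF⟩ := h2fh.1
    exact (h2fh.2 F hF).nonempty
  have hcard : 3 < Fintype.card V := by
    obtain ⟨v⟩ := hnonempty
    have h1 := G.degree_lt_card_verts v
    have h2 := hcubic v
    rw [Set.ncard_eq_toFinset_card'] at h2
    change G.degree v = 3 at h2
    omega
  refine ⟨⟨hcard, ?_⟩, card_mod G C hc h2fh m hinv hne hadj⟩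
  intro S hS
  have hne' : Nonempty (Sᶜ : Set V) := by
    by_contra h
    rw [Set.nonempty_coe_sort, Set.not_nonempty_iff_eq_empty, Set.compl_empty_iff] at h
    rw [h, Set.ncard_univ, Nat.card_eq_fintype_card] at hS
    omega
  refine @Connected.mk _ _ ?_ hne'
  intro x y
  by_contra hxy
  refine no_sep G h2fh m hinv hne hadj S.toFinset
    (Finset.univ.filter (fun v => ∃ h : v ∈ Sᶜ, (G.induce Sᶜ).Reachable x ⟨v, h⟩)) ?_ ?_ ?_
    x y ?_ ?_ ?_
  · rw [Set.ncard_eq_toFinset_card'] at hS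
    omega
  · rw [Finset.disjoint_left]
    intro v hv hvS
    obtain ⟨h, -⟩ := (Finset.mem_filter.1 hv).2
    exact h (by simpa using hvS)
  · intro v hv w hvw
    obtain ⟨h, hr⟩ := (Finset.mem_filter.1 hv).2
    by_cases hw : w ∈ S
    · exact Or.inr (by simpa using hw)
    · refine Or.inl (Finset.mem_filter.2 ⟨Finset.mem_univ _, hw, hr.trans ?_⟩)
      exact Adj.reachable (by simpa using hvw)
  · exact Finset.mem_filter.2 ⟨Finset.mem_univ _, x.2, Reachable.refl _⟩
  · intro h
    obtain ⟨h1, h2⟩ := (Finset.mem_filter.1 h).2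
    exact hxy h2
  · exact fun h => y.2 (Set.mem_toFinset.1 h)
end
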